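/- Let G be a finite-dimensional Hopf algebra and (λ, ρ) a commuting pair of coactions on M with dual actions ▷, ◁. Then the vector space Ĝ ⊗ M with product (φ ⋈ m)(ψ ⋈ n) := φψ₍₂₎ ⋈ (Ŝ⁻¹(ψ₍₁₎) ▷ m ◁ ψ₍₃₎)n is an associative unital algebra, and the map Ĝ ⋈ M → M ⋈ Ĝ sending φ ⋈ m to (φ₍₁₎ ▷ m ◁ Ŝ⁻¹(φ₍₃₎)) ⋈ φ₍₂₎ is an algebra isomorphism restricting to the identity on M, with inverse sending m ⋈ φ to φ₍₂₎ ⋈ (Ŝ⁻¹(φ₍₁₎) ▷ m ◁ φ₍₃₎). -/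

import Mathlib

open TensorProduct

/-- The Sweedler shuffle `φ ↦ (φ₍₁₎ ⊗ φ₍₃₎) ⊗ φ₍₂₎`. -/
noncomputable def sweedlerShuffle (H : Type*) [Ring H] [HopfAlgebra ℂ H] :
    H →ₗ[ℂ] (H ⊗[ℂ] H) ⊗[ℂ] H :=
  (TensorProduct.assoc ℂ H H H).symm.toLinearMap ∘ₗ
    TensorProduct.map LinearMap.id (TensorProduct.comm ℂ H H).toLinearMap ∘ₗ
    TensorProduct.map LinearMap.id (Coalgebra.comul (R := ℂ)) ∘ₗ
    Coalgebra.comul (R := ℂ)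

/-!
Let `τ(φ ⊗ m) = (φ₍₁₎ ▷ m ◁ Ŝ⁻¹(φ₍₃₎)) ⊗ φ₍₂₎`. Then `M ⋈ Ĝ` is the tensor product twisted by `τ`,
with `(m ⊗ φ)(n ⊗ ψ) = m τ(φ ⊗ n) ψ`, and `Ĝ ⋈ M` is the tensor product twisted by `τ⁻¹`. So it is
enough that `τ` is bijective and compatible with the two multiplications: then the algebra axioms
hold for `τ`, and `τ` transports them to `Ĝ ⋈ M`.

Since `φ ↦ Ŝ⁻¹(φ)`, with values in the opposite algebra, is the convolution inverse of `φ ↦ φ`, the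
maps `m ⊗ φ ↦ φ₍₁₎ ▷ m ⊗ φ₍₂₎` and `m ⊗ φ ↦ m ◁ φ₍₂₎ ⊗ φ₍₁₎` are bijective, and `τ` is the first
followed by the inverse of the second. On `M ⊗ Ĝ` the left multiplications `D(φ)` by `1 ⊗ φ` form a
representation of `Ĝ`, with `τ(φ ⊗ m) = D(φ)(m ⊗ 1)`: this is compatibility with the multiplication
of `Ĝ`. Compatibility with the multiplication of `M` follows from the exchange relation
`D(φ₍₁₎)(m ◁ φ₍₂₎) = (φ₍₁₎ ▷ m)D(φ₍₂₎)`.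
-/

namespace DiagonalCrossedProduct

open LinearMap Coalgebra WithConv MulOpposite

section TwistedTensorProduct

variable {R A B : Type*} [CommSemiring R] [Semiring A] [Algebra R A] [Semiring B] [Algebra R B]

/-- The multiplication `(a ⊗ b)(a' ⊗ b') = a τ(b ⊗ a') b'` on `A ⊗ B` determined by a linear map
`τ : B ⊗ A → A ⊗ B` that moves elements of `B` past elements of `A`. -/
noncomputable def twistedMul (τ : B ⊗[R] A →ₗ[R] A ⊗[R] B) :
    A ⊗[R] B →ₗ[R] A ⊗[R] B →ₗ[R] A ⊗[R] B :=
  TensorProduct.curry <|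
    TensorProduct.map (mul' R A) (mul' R B) ∘ₗ
    (TensorProduct.assoc R A A (B ⊗[R] B)).symm.toLinearMap ∘ₗ
    ((TensorProduct.assoc R A B B).toLinearMap ∘ₗ τ.rTensor B ∘ₗ
      (TensorProduct.assoc R B A B).symm.toLinearMap).lTensor A ∘ₗ
    (TensorProduct.assoc R A B (A ⊗[R] B)).toLinearMap

theorem twistedMul_tmul_tmul (τ : B ⊗[R] A →ₗ[R] A ⊗[R] B) (a a' : A) (b b' : B) :
    twistedMul τ (a ⊗ₜ b) (a' ⊗ₜ b') =
      TensorProduct.map (mulLeft R a) (mulRight R b') (τ (b ⊗ₜ a')) := by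
  simp only [twistedMul, TensorProduct.curry_apply, comp_apply, LinearEquiv.coe_coe,
    TensorProduct.assoc_tmul, TensorProduct.assoc_symm_tmul, lTensor_tmul, rTensor_tmul]
  induction τ (b ⊗ₜ a') with
  | zero => simp
  | add x y hx hy => simp only [map_add, TensorProduct.add_tmul, TensorProduct.tmul_add, hx, hy]
  | tmul x y => rfl

theorem twistedMul_one_tmul_tmul_one (τ : B ⊗[R] A →ₗ[R] A ⊗[R] B) (b : B) (a : A) :
    twistedMul τ (1 ⊗ₜ b) (a ⊗ₜ 1) = τ (b ⊗ₜ a) := by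
  simp [twistedMul_tmul_tmul]

theorem twistedMul_rTensor_mulLeft (τ : B ⊗[R] A →ₗ[R] A ⊗[R] B) (a : A) (x y : A ⊗[R] B) :
    twistedMul τ ((mulLeft R a).rTensor B x) y = (mulLeft R a).rTensor B (twistedMul τ x y) := by
  suffices twistedMul τ ∘ₗ (mulLeft R a).rTensor B =
      (twistedMul τ).compr₂ ((mulLeft R a).rTensor B) from congr($this x y)
  ext a' b a'' b''
  simp [twistedMul_tmul_tmul, rTensor, mulLeft_mul, TensorProduct.map_map]

theorem twistedMul_lTensor_mulRight (τ : B ⊗[R] A →ₗ[R] A ⊗[R] B) (b : B) (x y : A ⊗[R] B) :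
    twistedMul τ x ((mulRight R b).lTensor A y) = (mulRight R b).lTensor A (twistedMul τ x y) := by
  suffices (twistedMul τ).compl₂ ((mulRight R b).lTensor A) =
      (twistedMul τ).compr₂ ((mulRight R b).lTensor A) from congr($this x y)
  ext a' b' a'' b''
  simp [twistedMul_tmul_tmul, lTensor, mulRight_mul, TensorProduct.map_map]

/-- `τ : B ⊗ A → A ⊗ B` is a twisting map if it is compatible with the units and the
multiplications of `A` and `B`; the last two fields are the hexagon identities
`τ(bb' ⊗ a) = b τ(b' ⊗ a)` and `τ(b ⊗ aa') = τ(b ⊗ a) a'`, read in `A ⊗ B` with `twistedMul τ`. -/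
structure IsTwistingMap (τ : B ⊗[R] A →ₗ[R] A ⊗[R] B) : Prop where
  one_tmul (a : A) : τ (1 ⊗ₜ a) = a ⊗ₜ 1
  tmul_one (b : B) : τ (b ⊗ₜ 1) = 1 ⊗ₜ b
  mul_tmul (b b' : B) (a : A) : τ ((b * b') ⊗ₜ a) = twistedMul τ (1 ⊗ₜ b) (τ (b' ⊗ₜ a))
  tmul_mul (b : B) (a a' : A) : τ (b ⊗ₜ (a * a')) = twistedMul τ (τ (b ⊗ₜ a)) (a' ⊗ₜ 1)

namespace IsTwistingMap

variable {τ : B ⊗[R] A →ₗ[R] A ⊗[R] B}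

theorem one_twistedMul (hτ : IsTwistingMap τ) (x : A ⊗[R] B) : twistedMul τ (1 ⊗ₜ 1) x = x := by
  induction x with
  | zero => simp
  | add x y hx hy => rw [map_add, hx, hy]
  | tmul a b => simp [twistedMul_tmul_tmul, hτ.one_tmul]

theorem twistedMul_one (hτ : IsTwistingMap τ) (x : A ⊗[R] B) : twistedMul τ x (1 ⊗ₜ 1) = x := by
  induction x with
  | zero => simp
  | add x y hx hy => rw [map_add, LinearMap.add_apply, hx, hy]
  | tmul a b => simp [twistedMul_tmul_tmul, hτ.tmul_one]

theorem twistedMul_lTensor_mulRight_left (hτ : IsTwistingMap τ) (x : A ⊗[R] B) (b : B) (a : A) :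
    twistedMul τ ((mulRight R b).lTensor A x) (a ⊗ₜ 1) = twistedMul τ x (τ (b ⊗ₜ a)) := by
  induction x with
  | zero => simp
  | add x y hx hy => simp only [map_add, LinearMap.add_apply, hx, hy]
  | tmul a' b' =>
    have key := hτ.mul_tmul b' b a
    have h := twistedMul_rTensor_mulLeft τ a' (1 ⊗ₜ b')
    simp only [rTensor_tmul, mulLeft_apply, mul_one] at h
    simp [twistedMul_tmul_tmul, key, h, rTensor]

theorem twistedMul_rTensor_mulLeft_right (hτ : IsTwistingMap τ) (b : B) (a : A) (y : A ⊗[R] B) :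
    twistedMul τ (1 ⊗ₜ b) ((mulLeft R a).rTensor B y) = twistedMul τ (τ (b ⊗ₜ a)) y := by
  induction y with
  | zero => simp
  | add x y hx hy => simp only [map_add, hx, hy]
  | tmul a' b' =>
    have key := hτ.tmul_mul b a a'
    have h := twistedMul_lTensor_mulRight τ b' (τ (b ⊗ₜ a)) (a' ⊗ₜ 1)
    simp only [lTensor_tmul, mulRight_apply, one_mul] at h
    simp [twistedMul_tmul_tmul, key, h, lTensor]

theorem twistedMul_assoc (hτ : IsTwistingMap τ) (x y z : A ⊗[R] B) :
    twistedMul τ (twistedMul τ x y) z = twistedMul τ x (twistedMul τ y z) := by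
  suffices (twistedMul τ).compr₂ (twistedMul τ) =
      (llcomp R _ _ _ ∘ₗ twistedMul τ).compl₂ (twistedMul τ) from congr($this x y z)
  ext a b a' b' a'' b''
  change twistedMul τ (twistedMul τ (a ⊗ₜ b) (a' ⊗ₜ b')) (a'' ⊗ₜ b'') =
    twistedMul τ (a ⊗ₜ b) (twistedMul τ (a' ⊗ₜ b') (a'' ⊗ₜ b''))
  have map_eq (c : A) (d : B) (w : A ⊗[R] B) :
      TensorProduct.map (mulLeft R c) (mulRight R d) w =
        (mulLeft R c).rTensor B ((mulRight R d).lTensor A w) := by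
    rw [← comp_apply, rTensor_comp_lTensor]
  have hleft (y : A ⊗[R] B) :
      twistedMul τ (a ⊗ₜ b) y = (mulLeft R a).rTensor B (twistedMul τ (1 ⊗ₜ b) y) := by
    simpa using twistedMul_rTensor_mulLeft τ a (1 ⊗ₜ b) y
  have hright (x : A ⊗[R] B) :
      twistedMul τ x (a'' ⊗ₜ b'') =
        (mulRight R b'').lTensor A (twistedMul τ x (a'' ⊗ₜ 1)) := by
    simpa using twistedMul_lTensor_mulRight τ b'' x (a'' ⊗ₜ 1)
  calc twistedMul τ (twistedMul τ (a ⊗ₜ b) (a' ⊗ₜ b')) (a'' ⊗ₜ b'')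
    _ = (mulLeft R a).rTensor B ((mulRight R b'').lTensor A
          (twistedMul τ (τ (b ⊗ₜ a')) (τ (b' ⊗ₜ a'')))) := by
      rw [twistedMul_tmul_tmul, map_eq, twistedMul_rTensor_mulLeft, hright,
        hτ.twistedMul_lTensor_mulRight_left]
    _ = twistedMul τ (a ⊗ₜ b) (twistedMul τ (a' ⊗ₜ b') (a'' ⊗ₜ b'')) := by
      rw [hleft, twistedMul_tmul_tmul τ a', map_eq, hτ.twistedMul_rTensor_mulLeft_right,
        twistedMul_lTensor_mulRight]

theorem map_map_mulLeft_mulRight (hτ : IsTwistingMap τ) (b : B) (a : A) (v : B ⊗[R] A) :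
    τ (TensorProduct.map (mulLeft R b) (mulRight R a) v) =
      twistedMul τ (1 ⊗ₜ b) (twistedMul τ (τ v) (a ⊗ₜ 1)) := by
  induction v with
  | zero => simp
  | add x y hx hy => simp only [map_add, LinearMap.add_apply, hx, hy]
  | tmul b' a' => simp [hτ.mul_tmul, hτ.tmul_mul]

variable {τ : B ⊗[R] A ≃ₗ[R] A ⊗[R] B}

theorem map_twistedMul_symm (hτ : IsTwistingMap τ.toLinearMap) (x y : B ⊗[R] A) :
    τ (twistedMul τ.symm.toLinearMap x y) = twistedMul τ.toLinearMap (τ x) (τ y) := by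
  suffices (twistedMul τ.symm.toLinearMap).compr₂ τ.toLinearMap =
      (twistedMul τ.toLinearMap).compl₁₂ τ.toLinearMap τ.toLinearMap from congr($this x y)
  ext b a b' a'
  have hsplit : a ⊗ₜ[R] b' = twistedMul τ.toLinearMap (a ⊗ₜ 1) (1 ⊗ₜ b') := by
    simp [twistedMul_tmul_tmul, hτ.one_tmul]
  calc τ (twistedMul τ.symm.toLinearMap (b ⊗ₜ a) (b' ⊗ₜ a'))
    _ = twistedMul τ.toLinearMap (1 ⊗ₜ b)
          (twistedMul τ.toLinearMap (a ⊗ₜ b') (a' ⊗ₜ 1)) := by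
      rw [twistedMul_tmul_tmul]
      simpa using hτ.map_map_mulLeft_mulRight b a' (τ.symm (a ⊗ₜ b'))
    _ = twistedMul τ.toLinearMap (twistedMul τ.toLinearMap (1 ⊗ₜ b) (a ⊗ₜ 1))
          (twistedMul τ.toLinearMap (1 ⊗ₜ b') (a' ⊗ₜ 1)) := by
      rw [hsplit]
      simp only [hτ.twistedMul_assoc]
    _ = twistedMul τ.toLinearMap (τ (b ⊗ₜ a)) (τ (b' ⊗ₜ a')) := by
      simp only [twistedMul_one_tmul_tmul_one, LinearEquiv.coe_coe]

theorem twistedMul_symm_assoc (hτ : IsTwistingMap τ.toLinearMap) (x y z : B ⊗[R] A) :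
    twistedMul τ.symm.toLinearMap (twistedMul τ.symm.toLinearMap x y) z =
      twistedMul τ.symm.toLinearMap x (twistedMul τ.symm.toLinearMap y z) :=
  τ.injective <| by simp only [hτ.map_twistedMul_symm, hτ.twistedMul_assoc]

theorem one_twistedMul_symm (hτ : IsTwistingMap τ.toLinearMap) (x : B ⊗[R] A) :
    twistedMul τ.symm.toLinearMap (1 ⊗ₜ 1) x = x :=
  τ.injective <| by
    rw [hτ.map_twistedMul_symm, ← LinearEquiv.coe_coe, hτ.one_tmul, hτ.one_twistedMul]

theorem twistedMul_symm_one (hτ : IsTwistingMap τ.toLinearMap) (x : B ⊗[R] A) :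
    twistedMul τ.symm.toLinearMap x (1 ⊗ₜ 1) = x :=
  τ.injective <| by
    rw [hτ.map_twistedMul_symm, ← LinearEquiv.coe_coe, hτ.one_tmul, hτ.twistedMul_one]

end IsTwistingMap

end TwistedTensorProduct

theorem sum_counit_right_smul_left {R C : Type*} [CommSemiring R] [AddCommMonoid C] [Module R C]
    [Coalgebra R C] {φ : C} {ι : Type*} (r : Repr R φ ι) :
    ∑ i ∈ r.index, counit (R := R) (r.right i) • r.left i = φ := by
  simpa only [map_sum, TensorProduct.lift.tmul, flip_apply, lsmul_apply, one_smul] using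
    congr(TensorProduct.lift (lsmul R C).flip $(sum_tmul_counit_eq r))

section Convolution

variable {R A B C H : Type*} [CommSemiring R] [Semiring A] [Algebra R A] [Semiring B] [Algebra R B]
  [AddCommMonoid C] [Module R C] [Coalgebra R C] [Semiring H] [Bialgebra R H]

/-- Postcomposition with an algebra homomorphism as a homomorphism of convolution monoids. -/
def convPostcomp (h : A →ₐ[R] B) : WithConv (C →ₗ[R] A) →* WithConv (C →ₗ[R] B) where
  toFun f := toConv (h.toLinearMap ∘ₗ f.ofConv)
  map_one' := by ext c; simp [convOne_apply]
  map_mul' f g := WithConv.ext (algHom_comp_convMul_distrib h f g)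

variable (C) in
/-- The functional `c ↦ ε(c) x`. -/
def convConst (x : A) : WithConv (C →ₗ[R] A) := toConv (toSpanSingleton R A x ∘ₗ counit)

theorem convMul_convConst_apply (f : WithConv (C →ₗ[R] A)) (x : A) (c : C) :
    (f * convConst C x).ofConv c = f.ofConv c * x := by
  conv_rhs => rw [← sum_counit_right_smul_left (ℛ R c)]
  simp [(ℛ R c).convMul_apply, convConst, Finset.sum_mul]

theorem convConst_convMul_apply (f : WithConv (C →ₗ[R] A)) (x : A) (c : C) :
    (convConst C x * f).ofConv c = x * f.ofConv c := by
  conv_rhs => rw [← sum_counit_smul (ℛ R c)]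
  simp [(ℛ R c).convMul_apply, convConst, Finset.mul_sum]

theorem commute_convConst {f : WithConv (C →ₗ[R] A)} {x : A}
    (h : ∀ c, Commute (f.ofConv c) x) : Commute f (convConst C x) := by
  ext c
  rw [convMul_convConst_apply, convConst_convMul_apply, (h c).eq]

theorem convPostcomp_convConst (h : A →ₐ[R] B) (x : A) :
    convPostcomp h (convConst C x) = convConst C (h x) := by
  ext c
  simp [convPostcomp, convConst]

/-- The convolution product of two algebra homomorphisms with commuting images. -/
noncomputable def convMulAlgHom (f g : H →ₐ[R] A) (h : ∀ x y, Commute (f x) (g y)) : H →ₐ[R] A :=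
  (Algebra.TensorProduct.lift f g h).comp (Bialgebra.comulAlgHom R H)

theorem convMulAlgHom_apply (f g : H →ₐ[R] A) (h : ∀ x y, Commute (f x) (g y)) {φ : H}
    {ι : Type*} (r : Repr R φ ι) :
    convMulAlgHom f g h φ = ∑ i ∈ r.index, f (r.left i) * g (r.right i) := by
  simp [convMulAlgHom, ← r.eq]

theorem toConv_convMulAlgHom (f g : H →ₐ[R] A) (h : ∀ x y, Commute (f x) (g y)) :
    toConv (convMulAlgHom f g h).toLinearMap =
      toConv f.toLinearMap * toConv g.toLinearMap := by
  ext φ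
  simp [convMulAlgHom_apply f g h (ℛ R φ), (ℛ R φ).convMul_apply]

end Convolution

section Twist

variable {R C M : Type*} [CommSemiring R] [AddCommMonoid C] [Module R C] [Coalgebra R C]
  [AddCommMonoid M] [Module R M]

variable (R C) in
/-- The Sweedler shuffle `φ ↦ (φ₍₁₎ ⊗ φ₍₃₎) ⊗ φ₍₂₎` of a coalgebra over any commutative semiring;
for Hopf algebras over `ℂ` it is `sweedlerShuffle` by definition. -/
noncomputable def outerInnerComul : C →ₗ[R] (C ⊗[R] C) ⊗[R] C :=
  (TensorProduct.assoc R C C C).symm.toLinearMap ∘ₗ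
    TensorProduct.map LinearMap.id (TensorProduct.comm R C C).toLinearMap ∘ₗ
    TensorProduct.map LinearMap.id comul ∘ₗ comul

theorem outerInnerComul_eq_sum {φ : C} {ι : Type*} {κ : ι → Type*} (r : Repr R φ ι)
    (r₂ : ∀ i, Repr R (r.right i) (κ i)) :
    outerInnerComul R C φ = ∑ i ∈ r.index, ∑ j ∈ (r₂ i).index,
      (r.left i ⊗ₜ (r₂ i).right j) ⊗ₜ (r₂ i).left j := by
  simp [outerInnerComul, ← r.eq, ← (r₂ _).eq, TensorProduct.tmul_sum]

/-- The operator `m ⊗ φ ↦ α(φ₍₂₎)(m) ⊗ φ₍₁₎` on `M ⊗ C`. -/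
noncomputable def twistRight (α : WithConv (C →ₗ[R] Module.End R M)) : Module.End R (M ⊗[R] C) :=
  TensorProduct.lift <| lcomp R (M ⊗[R] C) comul ∘ₗ
    (TensorProduct.comm R C M).toLinearMap.compRight R ∘ₗ lTensorHom C ∘ₗ α.ofConv.flip

/-- The operator `m ⊗ φ ↦ α(φ₍₁₎)(m) ⊗ φ₍₂₎` on `M ⊗ C`. The operators `α(φ)` are taken in the
opposite of `End M` to make `twistLeft` reverse convolution products. -/
noncomputable def twistLeft (α : WithConv (C →ₗ[R] (Module.End R M)ᵐᵒᵖ)) :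
    Module.End R (M ⊗[R] C) :=
  TensorProduct.lift <| lcomp R (M ⊗[R] C) comul ∘ₗ
    rTensorHom C ∘ₗ ((opLinearEquiv R).symm.toLinearMap ∘ₗ α.ofConv).flip

theorem twistRight_tmul (α : WithConv (C →ₗ[R] Module.End R M)) (m : M) {φ : C} {ι : Type*}
    (r : Repr R φ ι) :
    twistRight α (m ⊗ₜ φ) = ∑ i ∈ r.index, α.ofConv (r.right i) m ⊗ₜ r.left i := by
  simp [twistRight, ← r.eq]

theorem twistLeft_tmul (α : WithConv (C →ₗ[R] (Module.End R M)ᵐᵒᵖ)) (m : M) {φ : C} {ι : Type*}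
    (r : Repr R φ ι) :
    twistLeft α (m ⊗ₜ φ) = ∑ i ∈ r.index, (α.ofConv (r.left i)).unop m ⊗ₜ r.right i := by
  simp [twistLeft, ← r.eq]

theorem twistRight_one : twistRight (1 : WithConv (C →ₗ[R] Module.End R M)) = 1 :=
  TensorProduct.ext' fun m φ ↦ by
    simp only [twistRight_tmul _ _ (ℛ R φ), convOne_apply, Algebra.algebraMap_eq_smul_one,
      LinearMap.smul_apply, Module.End.one_apply, TensorProduct.smul_tmul,
      ← TensorProduct.tmul_sum, sum_counit_right_smul_left]

theorem twistLeft_one : twistLeft (1 : WithConv (C →ₗ[R] (Module.End R M)ᵐᵒᵖ)) = 1 :=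
  TensorProduct.ext' fun m φ ↦ by
    simp only [twistLeft_tmul _ _ (ℛ R φ), convOne_apply, Algebra.algebraMap_eq_smul_one,
      unop_smul, unop_one, LinearMap.smul_apply, Module.End.one_apply, TensorProduct.smul_tmul,
      ← TensorProduct.tmul_sum, sum_counit_smul]

theorem twistRight_mul (α β : WithConv (C →ₗ[R] Module.End R M)) :
    twistRight (α * β) = twistRight α * twistRight β := by
  ext m φ
  let r := ℛ R φ
  let r₁ i := ℛ R (r.left i)
  let r₂ i := ℛ R (r.right i)
  have coassoc := congr((TensorProduct.comm R C M).toLinearMap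
    ((applyₗ m ∘ₗ mul' R _ ∘ₗ TensorProduct.map α.ofConv β.ofConv).lTensor C
      $(sum_tmul_tmul_eq r r₁ r₂)))
  simp only [map_sum, lTensor_tmul, comp_apply, TensorProduct.map_tmul, mul'_apply] at coassoc
  simpa [twistRight_tmul _ _ r, twistRight_tmul _ _ (r₁ _), (r₂ _).convMul_apply,
    TensorProduct.sum_tmul] using coassoc.symm

theorem twistLeft_mul (α β : WithConv (C →ₗ[R] (Module.End R M)ᵐᵒᵖ)) :
    twistLeft (α * β) = twistLeft β * twistLeft α := by
  ext m φ
  let r := ℛ R φ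
  let r₁ i := ℛ R (r.left i)
  let r₂ i := ℛ R (r.right i)
  have coassoc := congr((applyₗ m ∘ₗ (opLinearEquiv R).symm.toLinearMap ∘ₗ mul' R _ ∘ₗ
    TensorProduct.map α.ofConv β.ofConv).rTensor C
      ((TensorProduct.assoc R C C C).symm $(sum_tmul_tmul_eq r r₁ r₂)))
  simp only [map_sum, rTensor_tmul, comp_apply, TensorProduct.map_tmul, mul'_apply,
    TensorProduct.assoc_symm_tmul] at coassoc
  simpa [twistLeft_tmul _ _ r, twistLeft_tmul _ _ (r₂ _), (r₁ _).convMul_apply,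
    TensorProduct.sum_tmul] using coassoc

/-- `twistRight` of a convolution unit, with inverse `twistRight` of the convolution inverse. -/
noncomputable def twistRightEquiv (u : (WithConv (C →ₗ[R] Module.End R M))ˣ) :
    M ⊗[R] C ≃ₗ[R] M ⊗[R] C :=
  .ofLinearMap (twistRight u) (twistRight ↑u⁻¹)
    (by rw [← Module.End.mul_eq_comp, ← twistRight_mul, u.mul_inv, twistRight_one]; rfl)
    (by rw [← Module.End.mul_eq_comp, ← twistRight_mul, u.inv_mul, twistRight_one]; rfl)

/-- `twistLeft` of a convolution unit, with inverse `twistLeft` of the convolution inverse. -/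
noncomputable def twistLeftEquiv (u : (WithConv (C →ₗ[R] (Module.End R M)ᵐᵒᵖ))ˣ) :
    M ⊗[R] C ≃ₗ[R] M ⊗[R] C :=
  .ofLinearMap (twistLeft u) (twistLeft ↑u⁻¹)
    (by rw [← Module.End.mul_eq_comp, ← twistLeft_mul, u.inv_mul, twistLeft_one]; rfl)
    (by rw [← Module.End.mul_eq_comp, ← twistLeft_mul, u.mul_inv, twistLeft_one]; rfl)

theorem twistLeft_twistRight_tmul (α : WithConv (C →ₗ[R] (Module.End R M)ᵐᵒᵖ))
    (β : WithConv (C →ₗ[R] Module.End R M)) (m : M) (φ : C) :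
    twistLeft α (twistRight β (m ⊗ₜ φ)) =
      TensorProduct.map
        (TensorProduct.lift ((opLinearEquiv R).symm.toLinearMap ∘ₗ α.ofConv) ∘ₗ
          TensorProduct.map .id (β.ofConv.flip m)) .id (outerInnerComul R C φ) := by
  let r := ℛ R φ
  let r₁ i := ℛ R (r.left i)
  let r₂ i := ℛ R (r.right i)
  have coassoc := congr(TensorProduct.map
    (TensorProduct.lift ((opLinearEquiv R).symm.toLinearMap ∘ₗ α.ofConv) ∘ₗ
      TensorProduct.map .id (β.ofConv.flip m)) .id
    ((TensorProduct.assoc R C C C).symm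
      ((TensorProduct.comm R C C).toLinearMap.lTensor C $(sum_tmul_tmul_eq r r₁ r₂))))
  simpa [outerInnerComul_eq_sum r r₂, twistLeft_tmul _ _ (r₁ _), twistRight_tmul _ _ r]
    using coassoc

variable {α : WithConv (C →ₗ[R] (Module.End R M)ᵐᵒᵖ)} {β : WithConv (C →ₗ[R] Module.End R M)}

theorem twistRight_twistLeft_tmul
    (h : ∀ φ ψ, Commute (α.ofConv φ).unop (β.ofConv ψ)) (m : M) (φ : C) :
    twistRight β (twistLeft α (m ⊗ₜ φ)) =
      TensorProduct.map
        (TensorProduct.lift ((opLinearEquiv R).symm.toLinearMap ∘ₗ α.ofConv) ∘ₗ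
          TensorProduct.map .id (β.ofConv.flip m)) .id (outerInnerComul R C φ) := by
  let r := ℛ R φ
  let r₂ i := ℛ R (r.right i)
  have comm_apply (φ ψ) : β.ofConv ψ ((α.ofConv φ).unop m) = (α.ofConv φ).unop (β.ofConv ψ m) :=
    congr($((h φ ψ).eq) m).symm
  simp [outerInnerComul_eq_sum r r₂, twistLeft_tmul _ _ r, twistRight_tmul _ _ (r₂ _), comm_apply]

theorem commute_twistLeft_twistRight
    (h : ∀ φ ψ, Commute (α.ofConv φ).unop (β.ofConv ψ)) :
    Commute (twistLeft α) (twistRight β) :=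
  TensorProduct.ext' fun m φ ↦
    (twistLeft_twistRight_tmul α β m φ).trans (twistRight_twistLeft_tmul h m φ).symm

end Twist

/-- A skew antipode of a bialgebra `H`: an algebra homomorphism `T : H → Hᵐᵒᵖ` with
`T(φ₍₂₎)φ₍₁₎ = ε(φ) = φ₍₂₎T(φ₍₁₎)`. Both identities say that `T` is the convolution inverse of
`op : H → Hᵐᵒᵖ`. -/
structure SkewAntipode (R H : Type*) [CommSemiring R] [Semiring H] [Bialgebra R H] where
  toAlgHom : H →ₐ[R] Hᵐᵒᵖ
  op_convMul : toConv (opLinearEquiv R).toLinearMap * toConv toAlgHom.toLinearMap = 1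
  convMul_op : toConv toAlgHom.toLinearMap * toConv (opLinearEquiv R).toLinearMap = 1

namespace SkewAntipode

variable {R H : Type*} [CommSemiring R] [Semiring H]

/-- `op : H → Hᵐᵒᵖ` as a convolution unit whose inverse is a given skew antipode. -/
def opUnit [Bialgebra R H] (T : SkewAntipode R H) : (WithConv (H →ₗ[R] Hᵐᵒᵖ))ˣ where
  val := toConv (opLinearEquiv R).toLinearMap
  inv := toConv T.toAlgHom.toLinearMap
  val_inv := T.op_convMul
  inv_val := T.convMul_op

open HopfAlgebra

variable [HopfAlgebra R H]

/-- A linear inverse of the antipode of a Hopf algebra is a skew antipode. -/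
def ofAntipodeInverse (T : H →ₗ[R] H) (left_inv : ∀ x, T (antipode R x) = x)
    (right_inv : ∀ x, antipode R (T x) = x) : SkewAntipode R H where
  toAlgHom := .ofLinearMap ((opLinearEquiv R).toLinearMap ∘ₗ T)
    (by simpa using congr(op $(left_inv 1)))
    (fun x y ↦ unop_injective <| (Function.LeftInverse.injective left_inv) <| by
      simp [antipode_mul_antidistrib, right_inv])
  op_convMul := by
    ext φ
    refine unop_injective <| Function.LeftInverse.injective left_inv ?_
    simp [(ℛ R φ).convMul_apply, antipode_mul_antidistrib, right_inv, sum_antipode_mul_eq_smul,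
      Algebra.algebraMap_eq_smul_one]
  convMul_op := by
    ext φ
    refine unop_injective <| Function.LeftInverse.injective left_inv ?_
    simp [(ℛ R φ).convMul_apply, antipode_mul_antidistrib, right_inv, sum_mul_antipode_eq_smul,
      Algebra.algebraMap_eq_smul_one]

end SkewAntipode

theorem semiconjBy_convConst_lmul {R C M : Type*} [CommSemiring R] [AddCommMonoid C] [Module R C]
    [Coalgebra R C] [Semiring M] [Algebra R M] {α : C →ₗ[R] Module.End R M} {m : M}
    (hα : ∀ φ n, α φ (m * n) = mul' R M (TensorProduct.map (α.flip m) (α.flip n) (comul φ))) :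
    SemiconjBy (toConv α) (convConst C (Algebra.lmul R M m))
      (toConv ((Algebra.lmul R M).toLinearMap ∘ₗ α.flip m)) := by
  ext φ n
  rw [convMul_convConst_apply, (ℛ R φ).convMul_apply]
  simp [hα, ← (ℛ R φ).eq]

theorem commute_rTensorAlgHom_lTensorAlgHom {R M N : Type*} [CommSemiring R] [AddCommMonoid M]
    [Module R M] [AddCommMonoid N] [Module R N] (f : Module.End R M) (g : Module.End R N) :
    Commute (Module.End.rTensorAlgHom R M N f) (Module.End.lTensorAlgHom R N M g) :=
  TensorProduct.ext' fun _ _ ↦ rfl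

theorem commute_lTensor_lmul_rTensor {R H M : Type*} [CommSemiring R] [Semiring H] [Algebra R H]
    [AddCommMonoid M] [Module R M] (g : H →ₐ[R] Module.End R M) (φ ψ : H) :
    Commute ((Module.End.lTensorAlgHom R H M).comp (Algebra.lmul R H) φ)
      ((Module.End.rTensorAlgHom R M H).comp g ψ) :=
  (commute_rTensorAlgHom_lTensorAlgHom _ _).symm

/-- A pair of commuting actions of a bialgebra `H` on an algebra `M`, the left action
`φ ▷ m = left φ m` and the right action `m ◁ φ = right (op φ) m`, which satisfy
`φ ▷ mn = (φ₍₁₎ ▷ m)(φ₍₂₎ ▷ n)` and `mn ◁ φ = (m ◁ φ₍₁₎)(n ◁ φ₍₂₎)`. Such pairs arise by dualizing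
commuting pairs of coactions on `M`. -/
structure CommutingActions (R H M : Type*) [CommSemiring R] [Semiring H] [Bialgebra R H]
    [Semiring M] [Algebra R M] where
  left : H →ₐ[R] Module.End R M
  right : Hᵐᵒᵖ →ₐ[R] Module.End R M
  commute (φ : H) (ψ : Hᵐᵒᵖ) : Commute (left φ) (right ψ)
  left_map_mul (φ : H) (m n : M) : left φ (m * n) =
    mul' R M (TensorProduct.map (left.toLinearMap.flip m) (left.toLinearMap.flip n) (comul φ))
  right_map_mul (φ : H) (m n : M) : right (op φ) (m * n) =
    mul' R M (TensorProduct.map ((right.toLinearMap ∘ₗ (opLinearEquiv R).toLinearMap).flip m)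
      ((right.toLinearMap ∘ₗ (opLinearEquiv R).toLinearMap).flip n) (comul φ))

namespace CommutingActions

variable {R H M : Type*} [CommSemiring R] [Semiring H] [Bialgebra R H] [Semiring M] [Algebra R M]
  (𝒜 : CommutingActions R H M) (T : SkewAntipode R H)

/-- The left action as a convolution unit, with inverse `φ ↦ T(φ) ▷ ·`. -/
noncomputable def leftUnit : (WithConv (H →ₗ[R] (Module.End R M)ᵐᵒᵖ))ˣ :=
  Units.map (convPostcomp (AlgHom.op 𝒜.left)) T.opUnit

/-- The right action as a convolution unit, with inverse `φ ↦ · ◁ T(φ)`. -/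
noncomputable def rightUnit : (WithConv (H →ₗ[R] Module.End R M))ˣ :=
  Units.map (convPostcomp 𝒜.right) T.opUnit

/-- The exchange map `φ ⊗ m ↦ (φ₍₁₎ ▷ m ◁ T(φ₍₃₎)) ⊗ φ₍₂₎`. -/
noncomputable def exchange : H ⊗[R] M ≃ₗ[R] M ⊗[R] H :=
  TensorProduct.comm R H M ≪≫ₗ twistLeftEquiv (𝒜.leftUnit T) ≪≫ₗ
    (twistRightEquiv (𝒜.rightUnit T)).symm

theorem exchange_tmul (φ : H) (m : M) :
    𝒜.exchange T (φ ⊗ₜ m) =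
      TensorProduct.map (TensorProduct.lift 𝒜.left.toLinearMap ∘ₗ
        TensorProduct.map .id ((𝒜.right.comp T.toAlgHom).toLinearMap.flip m)) .id
        (outerInnerComul R H φ) :=
  twistRight_twistLeft_tmul (α := (𝒜.leftUnit T).val) (β := (𝒜.rightUnit T).inv)
    (fun _ _ ↦ 𝒜.commute _ _) m φ

theorem exchange_symm_tmul (m : M) (φ : H) :
    (𝒜.exchange T).symm (m ⊗ₜ φ) = TensorProduct.comm R M H
      (TensorProduct.map (TensorProduct.lift 𝒜.left.toLinearMap ∘ₗ
        TensorProduct.map ((opLinearEquiv R).symm.toLinearMap ∘ₗ T.toAlgHom.toLinearMap)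
          ((𝒜.right.toLinearMap ∘ₗ (opLinearEquiv R).toLinearMap).flip m)) .id
        (outerInnerComul R H φ)) := by
  have lift_left : TensorProduct.lift 𝒜.left.toLinearMap ∘ₗ
      TensorProduct.map ((opLinearEquiv R).symm.toLinearMap ∘ₗ T.toAlgHom.toLinearMap)
        ((𝒜.right.toLinearMap ∘ₗ (opLinearEquiv R).toLinearMap).flip m) =
      TensorProduct.lift (𝒜.left.toLinearMap ∘ₗ (opLinearEquiv R).symm.toLinearMap ∘ₗ
          T.toAlgHom.toLinearMap) ∘ₗ
        TensorProduct.map .id ((𝒜.right.toLinearMap ∘ₗ (opLinearEquiv R).toLinearMap).flip m) :=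
    TensorProduct.ext' fun _ _ ↦ rfl
  rw [lift_left]
  exact congr(TensorProduct.comm R M H
    $(twistLeft_twistRight_tmul (𝒜.leftUnit T).inv (𝒜.rightUnit T).val m φ))

/-- The representation `φ ↦ (m ⊗ χ ↦ m ◁ T(φ₍₂₎) ⊗ φ₍₁₎χ)` of `H` on `M ⊗ H`. -/
noncomputable def innerRep : H →ₐ[R] Module.End R (M ⊗[R] H) :=
  convMulAlgHom ((Module.End.lTensorAlgHom R H M).comp (Algebra.lmul R H))
    ((Module.End.rTensorAlgHom R M H).comp (𝒜.right.comp T.toAlgHom))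
    (commute_lTensor_lmul_rTensor _)

theorem commute_rTensor_left_innerRep (φ ψ : H) :
    Commute ((Module.End.rTensorAlgHom R M H).comp 𝒜.left φ) (𝒜.innerRep T ψ) := by
  rw [innerRep, convMulAlgHom_apply _ _ _ (ℛ R ψ)]
  exact Commute.sum_right _ _ _ fun i _ ↦ (commute_rTensorAlgHom_lTensorAlgHom _ _).mul_right
    ((𝒜.commute φ _).map (Module.End.rTensorAlgHom R M H))

/-- The representation `φ ↦ (m ⊗ χ ↦ (φ₍₁₎ ▷ m ◁ T(φ₍₃₎)) ⊗ φ₍₂₎χ)` of `H` on `M ⊗ H`. -/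
noncomputable def diagonalRep : H →ₐ[R] Module.End R (M ⊗[R] H) :=
  convMulAlgHom ((Module.End.rTensorAlgHom R M H).comp 𝒜.left) (𝒜.innerRep T)
    (𝒜.commute_rTensor_left_innerRep T)

theorem diagonalRep_tmul (φ χ : H) (m : M) :
    𝒜.diagonalRep T φ (m ⊗ₜ χ) = (mulRight R χ).lTensor M (𝒜.exchange T (φ ⊗ₜ m)) := by
  let r := ℛ R φ
  let r₂ i := ℛ R (r.right i)
  rw [diagonalRep, convMulAlgHom_apply _ _ _ r]
  simp only [innerRep, convMulAlgHom_apply _ _ _ (r₂ _),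
    exchange_tmul, outerInnerComul_eq_sum r r₂, Finset.mul_sum, LinearMap.sum_apply, map_sum]
  rfl

theorem exchange_eq_diagonalRep (φ : H) (m : M) :
    𝒜.exchange T (φ ⊗ₜ m) = 𝒜.diagonalRep T φ (m ⊗ₜ 1) := by
  simp [diagonalRep_tmul]

theorem twistedMul_exchange_tmul (m : M) (φ : H) :
    twistedMul (𝒜.exchange T).toLinearMap (m ⊗ₜ φ) =
      Module.End.rTensorAlgHom R M H (Algebra.lmul R M m) * 𝒜.diagonalRep T φ := by
  refine TensorProduct.ext' fun n χ ↦ ?_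
  rw [twistedMul_tmul_tmul, Module.End.mul_apply, diagonalRep_tmul, ← rTensor_comp_lTensor]
  rfl

theorem toConv_diagonalRep :
    toConv (𝒜.diagonalRep T).toLinearMap =
      convPostcomp (Module.End.rTensorAlgHom R M H) (toConv 𝒜.left.toLinearMap) *
        (toConv ((Module.End.lTensorAlgHom R H M).comp (Algebra.lmul R H)).toLinearMap *
          convPostcomp (Module.End.rTensorAlgHom R M H) ↑(𝒜.rightUnit T)⁻¹) := by
  rw [diagonalRep, toConv_convMulAlgHom, innerRep, toConv_convMulAlgHom]
  rfl

theorem semiconjBy_diagonalRep (m : M) :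
    SemiconjBy (toConv (𝒜.diagonalRep T).toLinearMap)
      (convPostcomp (Module.End.rTensorAlgHom R M H) (toConv ((Algebra.lmul R M).toLinearMap ∘ₗ
        (𝒜.right.toLinearMap ∘ₗ (opLinearEquiv R).toLinearMap).flip m)))
      (convPostcomp (Module.End.rTensorAlgHom R M H) (toConv ((Algebra.lmul R M).toLinearMap ∘ₗ
        𝒜.left.toLinearMap.flip m))) := by
  have hleft : SemiconjBy (toConv 𝒜.left.toLinearMap) _ _ :=
    semiconjBy_convConst_lmul fun φ ↦ 𝒜.left_map_mul φ m
  have hmid : SemiconjBy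
      (toConv ((Module.End.lTensorAlgHom R H M).comp (Algebra.lmul R H)).toLinearMap)
      (convPostcomp (Module.End.rTensorAlgHom R M H) (convConst H (Algebra.lmul R M m)))
      (convPostcomp (Module.End.rTensorAlgHom R M H) (convConst H (Algebra.lmul R M m))) := by
    rw [convPostcomp_convConst]
    exact commute_convConst fun φ ↦ (commute_rTensorAlgHom_lTensorAlgHom _ _).symm
  have hright : SemiconjBy (𝒜.rightUnit T).val _ _ :=
    semiconjBy_convConst_lmul fun φ ↦ 𝒜.right_map_mul φ m
  rw [toConv_diagonalRep]
  exact (hleft.map (convPostcomp (Module.End.rTensorAlgHom R M H))).mul_left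
    (hmid.mul_left (hright.units_inv_symm_left.map (convPostcomp (Module.End.rTensorAlgHom R M H))))

theorem exchange_eq_twistLeft (φ : H) (m : M) :
    𝒜.exchange T (φ ⊗ₜ m) =
      twistLeft (𝒜.leftUnit T).val ((twistRightEquiv (𝒜.rightUnit T)).symm (m ⊗ₜ φ)) :=
  congr($((commute_twistLeft_twistRight (α := (𝒜.leftUnit T).val) (β := (𝒜.rightUnit T).inv)
    fun _ _ ↦ 𝒜.commute _ _).eq) (m ⊗ₜ φ)).symm

theorem twistedMul_exchange_twistLeft (z : M ⊗[R] H) :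
    twistedMul (𝒜.exchange T).toLinearMap (twistLeft (𝒜.leftUnit T).val z) =
      mul' R (Module.End R (M ⊗[R] H)) (TensorProduct.map (𝒜.diagonalRep T).toLinearMap
        ((Module.End.rTensorAlgHom R M H).comp (Algebra.lmul R M)).toLinearMap
        (TensorProduct.comm R M H (twistRight (𝒜.rightUnit T).val z))) := by
  induction z with
  | zero => simp only [map_zero]
  | add x y hx hy => simp only [map_add, hx, hy]
  | tmul m φ =>
    have h := congr(($(𝒜.semiconjBy_diagonalRep T m)).ofConv φ)
    rw [(ℛ R φ).convMul_apply, (ℛ R φ).convMul_apply] at h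
    simp only [twistRight_tmul _ _ (ℛ R φ), twistLeft_tmul _ _ (ℛ R φ), map_sum,
      twistedMul_exchange_tmul]
    exact h.symm

theorem twistedMul_exchange_exchange (φ : H) (m : M) :
    twistedMul (𝒜.exchange T).toLinearMap (𝒜.exchange T (φ ⊗ₜ m)) =
      𝒜.diagonalRep T φ * Module.End.rTensorAlgHom R M H (Algebra.lmul R M m) := by
  have apply_symm : twistRight (𝒜.rightUnit T).val
      ((twistRightEquiv (𝒜.rightUnit T)).symm (m ⊗ₜ φ)) = m ⊗ₜ φ :=
    (twistRightEquiv (𝒜.rightUnit T)).apply_symm_apply _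
  rw [exchange_eq_twistLeft, twistedMul_exchange_twistLeft, apply_symm]
  rfl

theorem exchange_tmul_mul (φ : H) (m n : M) :
    𝒜.exchange T (φ ⊗ₜ (m * n)) =
      twistedMul (𝒜.exchange T).toLinearMap (𝒜.exchange T (φ ⊗ₜ m)) (n ⊗ₜ 1) := by
  rw [twistedMul_exchange_exchange, exchange_eq_diagonalRep]
  rfl

theorem isTwistingMap_exchange : IsTwistingMap (𝒜.exchange T).toLinearMap where
  one_tmul m := by
    rw [LinearEquiv.coe_coe, exchange_eq_diagonalRep, map_one, Module.End.one_apply]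
  tmul_one φ := by
    -- Right multiplication by `1 ⊗ 1` fixes `τ(φ ⊗ m) = τ(φ ⊗ m1)`, and `τ` is onto.
    have mul_one_tmul_one (x : M ⊗[R] H) :
        twistedMul (𝒜.exchange T).toLinearMap x (1 ⊗ₜ 1) = x := by
      obtain ⟨y, rfl⟩ := (𝒜.exchange T).surjective x
      induction y with
      | zero => simp only [map_zero, LinearMap.zero_apply]
      | add y z hy hz => simp only [map_add, LinearMap.add_apply, hy, hz]
      | tmul φ m => rw [← exchange_tmul_mul, mul_one]
    simpa only [twistedMul_one_tmul_tmul_one] using mul_one_tmul_one (1 ⊗ₜ φ)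
  mul_tmul φ ψ m := by
    simp only [LinearEquiv.coe_coe, exchange_eq_diagonalRep, twistedMul_exchange_tmul, map_mul,
      map_one, one_mul, Module.End.mul_apply]
  tmul_mul := 𝒜.exchange_tmul_mul T

end CommutingActions

/-- The bundled form of a left action `act φ m = φ ▷ m` and a right action `ract φ m = m ◁ φ` given
as bilinear maps. -/
def CommutingActions.ofLinearMap {R H M : Type*} [CommSemiring R] [Semiring H] [Bialgebra R H]
    [Semiring M] [Algebra R M] (act ract : H →ₗ[R] Module.End R M)
    (act_mul : ∀ φ ψ m, act (φ * ψ) m = act φ (act ψ m)) (act_one : ∀ m, act 1 m = m)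
    (ract_mul : ∀ φ ψ m, ract ψ (ract φ m) = ract (φ * ψ) m) (ract_one : ∀ m, ract 1 m = m)
    (act_ract : ∀ φ ψ m, act φ (ract ψ m) = ract ψ (act φ m))
    (act_map_mul : ∀ φ m n,
      act φ (m * n) = mul' R M (TensorProduct.map (act.flip m) (act.flip n) (comul φ)))
    (ract_map_mul : ∀ φ m n,
      ract φ (m * n) = mul' R M (TensorProduct.map (ract.flip m) (ract.flip n) (comul φ))) :
    CommutingActions R H M where
  left := .ofLinearMap act (LinearMap.ext act_one) fun φ ψ ↦ LinearMap.ext (act_mul φ ψ)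
  right := .ofLinearMap (ract ∘ₗ (opLinearEquiv R).symm.toLinearMap) (LinearMap.ext ract_one)
    fun φ ψ ↦ LinearMap.ext fun m ↦ (ract_mul ψ.unop φ.unop m).symm
  commute φ ψ := LinearMap.ext (act_ract φ ψ.unop)
  left_map_mul := act_map_mul
  right_map_mul := ract_map_mul

end DiagonalCrossedProduct

open DiagonalCrossedProduct

theorem statement5_general {R : Type*} [CommSemiring R] (H M : Type*) [Semiring H]
    [HopfAlgebra R H] [Semiring M] [Algebra R M]
    (Si : H →ₗ[R] H)
    (hSi1 : ∀ x : H, Si (HopfAlgebra.antipode (R := R) x) = x)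
    (hSi2 : ∀ x : H, HopfAlgebra.antipode (R := R) (Si x) = x)
    (act : H →ₗ[R] M →ₗ[R] M)
    (hact_mul : ∀ (φ ψ : H) (m : M), act (φ * ψ) m = act φ (act ψ m))
    (hact_one : ∀ m : M, act 1 m = m)
    (hact_alg : ∀ (φ : H) (m n : M),
      act φ (m * n) =
        LinearMap.mul' R M
          (TensorProduct.map (act.flip m) (act.flip n) (Coalgebra.comul (R := R) φ)))
    (ract : H →ₗ[R] M →ₗ[R] M)
    (hract_mul : ∀ (φ ψ : H) (m : M), ract ψ (ract φ m) = ract (φ * ψ) m)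
    (hract_one : ∀ m : M, ract 1 m = m)
    (hract_alg : ∀ (φ : H) (m n : M),
      ract φ (m * n) =
        LinearMap.mul' R M
          (TensorProduct.map (ract.flip m) (ract.flip n) (Coalgebra.comul (R := R) φ)))
    (hcomm : ∀ (φ ψ : H) (m : M), act φ (ract ψ m) = ract ψ (act φ m))
    (mulR : M ⊗[R] H →ₗ[R] M ⊗[R] H →ₗ[R] M ⊗[R] H)
    (hmulR : ∀ (m n : M) (φ ψ : H),
      mulR (m ⊗ₜ[R] φ) (n ⊗ₜ[R] ψ) =
        TensorProduct.map
          (LinearMap.mulLeft R m ∘ₗ TensorProduct.lift act ∘ₗ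
            TensorProduct.map LinearMap.id (ract.flip n ∘ₗ Si))
          (LinearMap.mulRight R ψ) (outerInnerComul R H φ))
    (mulL : H ⊗[R] M →ₗ[R] H ⊗[R] M →ₗ[R] H ⊗[R] M)
    (hmulL : ∀ (φ ψ : H) (m n : M),
      mulL (φ ⊗ₜ[R] m) (ψ ⊗ₜ[R] n) =
        (TensorProduct.comm R M H)
          (TensorProduct.map
            (LinearMap.mulRight R n ∘ₗ TensorProduct.lift act ∘ₗ
              TensorProduct.map Si (ract.flip m))
            (LinearMap.mulLeft R φ) (outerInnerComul R H ψ)))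
    (f : H ⊗[R] M →ₗ[R] M ⊗[R] H)
    (hf : ∀ (φ : H) (m : M),
      f (φ ⊗ₜ[R] m) =
        TensorProduct.map
          (TensorProduct.lift act ∘ₗ TensorProduct.map LinearMap.id (ract.flip m ∘ₗ Si))
          LinearMap.id (outerInnerComul R H φ))
    (g : M ⊗[R] H →ₗ[R] H ⊗[R] M)
    (hg : ∀ (m : M) (φ : H),
      g (m ⊗ₜ[R] φ) =
        (TensorProduct.comm R M H)
          (TensorProduct.map
            (TensorProduct.lift act ∘ₗ TensorProduct.map Si (ract.flip m))
            LinearMap.id (outerInnerComul R H φ))) :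
    (∀ x y z : H ⊗[R] M, mulL (mulL x y) z = mulL x (mulL y z)) ∧
    (∀ x : H ⊗[R] M, mulL ((1 : H) ⊗ₜ[R] (1 : M)) x = x) ∧
    (∀ x : H ⊗[R] M, mulL x ((1 : H) ⊗ₜ[R] (1 : M)) = x) ∧
    (∀ x y : H ⊗[R] M, f (mulL x y) = mulR (f x) (f y)) ∧
    (∀ m : M, f ((1 : H) ⊗ₜ[R] m) = m ⊗ₜ[R] (1 : H)) ∧
    (∀ x : H ⊗[R] M, g (f x) = x) ∧
    (∀ y : M ⊗[R] H, f (g y) = y) := by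
  let 𝒜 : CommutingActions R H M := .ofLinearMap act ract hact_mul hact_one hract_mul hract_one
    hcomm hact_alg hract_alg
  let T : SkewAntipode R H := .ofAntipodeInverse Si hSi1 hSi2
  have f_eq : f = (𝒜.exchange T).toLinearMap :=
    TensorProduct.ext' fun φ m ↦ (hf φ m).trans (𝒜.exchange_tmul T φ m).symm
  have g_eq : g = (𝒜.exchange T).symm.toLinearMap :=
    TensorProduct.ext' fun m φ ↦ (hg m φ).trans (𝒜.exchange_symm_tmul T m φ).symm
  have mulR_eq : mulR = twistedMul f := by
    ext m φ n ψ
    simp [hmulR, hf, twistedMul_tmul_tmul, TensorProduct.map_map]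
  have mulL_eq : mulL = twistedMul g := by
    ext φ m ψ n
    simp [hmulL, hg, twistedMul_tmul_tmul, TensorProduct.map_map, TensorProduct.map_comm]
  subst mulR_eq mulL_eq f_eq g_eq
  have hτ := 𝒜.isTwistingMap_exchange T
  exact ⟨hτ.twistedMul_symm_assoc, hτ.one_twistedMul_symm, hτ.twistedMul_symm_one,
    hτ.map_twistedMul_symm, hτ.one_tmul, (𝒜.exchange T).symm_apply_apply,
    (𝒜.exchange T).apply_symm_apply⟩

/-- For a finite-dimensional Hopf algebra `G` and a commuting pair of
coactions `(λ, ρ)` on `M` with dual actions `▷ = act`, `◁ = ract` of `Ĝ = H`, the vector space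
`Ĝ ⊗ M` with the product `(φ ⋈ m)(ψ ⋈ n) = φψ₂ ⋈ (Ŝ⁻¹(ψ₁) ▷ m ◁ ψ₃)n` is an associative
unital algebra, and `f : Ĝ ⋈ M → M ⋈ Ĝ`, `φ ⋈ m ↦ (φ₁ ▷ m ◁ Ŝ⁻¹(φ₃)) ⋈ φ₂`, is an algebra
isomorphism restricting to the identity on `M`, with inverse
`m ⋈ φ ↦ φ₂ ⋈ (Ŝ⁻¹(φ₁) ▷ m ◁ φ₃)`. -/
theorem statement5
    (H M : Type*) [Ring H] [HopfAlgebra ℂ H] [Ring M] [Algebra ℂ M]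
    [FiniteDimensional ℂ H]
    (Si : H →ₗ[ℂ] H)
    (hSi1 : ∀ x : H, Si (HopfAlgebra.antipode (R := ℂ) x) = x)
    (hSi2 : ∀ x : H, HopfAlgebra.antipode (R := ℂ) (Si x) = x)
    -- left Hopf module action `▷` of `Ĝ = H` (dual to `ρ`)
    (act : H →ₗ[ℂ] M →ₗ[ℂ] M)
    (hact_mul : ∀ (φ ψ : H) (m : M), act (φ * ψ) m = act φ (act ψ m))
    (hact_one : ∀ m : M, act 1 m = m)
    (hact_alg : ∀ (φ : H) (m n : M),
      act φ (m * n) =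
        LinearMap.mul' ℂ M
          (TensorProduct.map (act.flip m) (act.flip n) (Coalgebra.comul (R := ℂ) φ)))
    (hact_unit : ∀ φ : H, act φ (1 : M) = Coalgebra.counit (R := ℂ) φ • (1 : M))
    -- right Hopf module action `◁` of `Ĝ = H` (dual to `λ`)
    (ract : H →ₗ[ℂ] M →ₗ[ℂ] M)
    (hract_mul : ∀ (φ ψ : H) (m : M), ract ψ (ract φ m) = ract (φ * ψ) m)
    (hract_one : ∀ m : M, ract 1 m = m)
    (hract_alg : ∀ (φ : H) (m n : M),
      ract φ (m * n) =
        LinearMap.mul' ℂ M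
          (TensorProduct.map (ract.flip m) (ract.flip n) (Coalgebra.comul (R := ℂ) φ)))
    (hract_unit : ∀ φ : H, ract φ (1 : M) = Coalgebra.counit (R := ℂ) φ • (1 : M))
    (hcomm : ∀ (φ ψ : H) (m : M), act φ (ract ψ m) = ract ψ (act φ m))
    -- the right diagonal crossed product `M ⋈ Ĝ`
    (mulR : M ⊗[ℂ] H →ₗ[ℂ] M ⊗[ℂ] H →ₗ[ℂ] M ⊗[ℂ] H)
    (hmulR : ∀ (m n : M) (φ ψ : H),
      mulR (m ⊗ₜ[ℂ] φ) (n ⊗ₜ[ℂ] ψ) =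
        TensorProduct.map
          (LinearMap.mulLeft ℂ m ∘ₗ TensorProduct.lift act ∘ₗ
            TensorProduct.map LinearMap.id (ract.flip n ∘ₗ Si))
          (LinearMap.mulRight ℂ ψ) (sweedlerShuffle H φ))
    -- the left diagonal crossed product `Ĝ ⋈ M` with product
    -- `(φ ⋈ m)(ψ ⋈ n) = φψ₂ ⋈ (Ŝ⁻¹(ψ₁) ▷ m ◁ ψ₃)n`
    (mulL : H ⊗[ℂ] M →ₗ[ℂ] H ⊗[ℂ] M →ₗ[ℂ] H ⊗[ℂ] M)
    (hmulL : ∀ (φ ψ : H) (m n : M),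
      mulL (φ ⊗ₜ[ℂ] m) (ψ ⊗ₜ[ℂ] n) =
        (TensorProduct.comm ℂ M H)
          (TensorProduct.map
            (LinearMap.mulRight ℂ n ∘ₗ TensorProduct.lift act ∘ₗ
              TensorProduct.map Si (ract.flip m))
            (LinearMap.mulLeft ℂ φ) (sweedlerShuffle H ψ)))
    -- the map `f : Ĝ ⋈ M → M ⋈ Ĝ`, `φ ⋈ m ↦ (φ₁ ▷ m ◁ Ŝ⁻¹(φ₃)) ⋈ φ₂`
    (f : H ⊗[ℂ] M →ₗ[ℂ] M ⊗[ℂ] H)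
    (hf : ∀ (φ : H) (m : M),
      f (φ ⊗ₜ[ℂ] m) =
        TensorProduct.map
          (TensorProduct.lift act ∘ₗ TensorProduct.map LinearMap.id (ract.flip m ∘ₗ Si))
          LinearMap.id (sweedlerShuffle H φ))
    -- the map `g : M ⋈ Ĝ → Ĝ ⋈ M`, `m ⋈ φ ↦ φ₂ ⋈ (Ŝ⁻¹(φ₁) ▷ m ◁ φ₃)`
    (g : M ⊗[ℂ] H →ₗ[ℂ] H ⊗[ℂ] M)
    (hg : ∀ (m : M) (φ : H),
      g (m ⊗ₜ[ℂ] φ) =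
        (TensorProduct.comm ℂ M H)
          (TensorProduct.map
            (TensorProduct.lift act ∘ₗ TensorProduct.map Si (ract.flip m))
            LinearMap.id (sweedlerShuffle H φ))) :
    -- `Ĝ ⋈ M` is an associative unital algebra
    (∀ x y z : H ⊗[ℂ] M, mulL (mulL x y) z = mulL x (mulL y z)) ∧
    (∀ x : H ⊗[ℂ] M, mulL ((1 : H) ⊗ₜ[ℂ] (1 : M)) x = x) ∧
    (∀ x : H ⊗[ℂ] M, mulL x ((1 : H) ⊗ₜ[ℂ] (1 : M)) = x) ∧
    -- `f` is an algebra isomorphism restricting to the identity on `M`, with inverse `g`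
    (∀ x y : H ⊗[ℂ] M, f (mulL x y) = mulR (f x) (f y)) ∧
    (∀ m : M, f ((1 : H) ⊗ₜ[ℂ] m) = m ⊗ₜ[ℂ] (1 : H)) ∧
    (∀ x : H ⊗[ℂ] M, g (f x) = x) ∧
    (∀ y : M ⊗[ℂ] H, f (g y) = y) :=
  statement5_general H M Si hSi1 hSi2 act hact_mul hact_one hact_alg ract hract_mul hract_one
    hract_alg hcomm mulR hmulR mulL hmulL f hf g hg
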